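/- Let A be an alphabet and H, H' ⊆ A* two languages. Let B = A ∪ {#, $} with #, $ ∉ A, and define L = #(H'#(A*$#)*)*H#(A*$#)* ⊆ B* and L' = #(H'#(A*$#)*)* ⊆ B*. Then H is ST[3/2]-separable from H' if and only if L is ST[2]-separable from L'. -/

import Mathlib

/-! Infrastructure: classes of languages (one set of languages for every finite
alphabet, alphabets being modelled as types), quotienting lattices, Boolean and
polynomial closure, separation, regular languages, recognition by monoid morphisms,
and the notions of extension and fooling tagging from the paper. The fixed two-letter
alphabet `𝔼 = {0,1}` is modelled as `Bool`, and the disjoint union `A ∪ 𝔼` as the sum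
type `A ⊕ Bool`. On `Language A` (which is `Set (List A)`) we use the lattice
operations `≤, ⊓, ⊔, ⊥` for `⊆, ∩, ∪, ∅`. -/

/-- A class of languages: to every alphabet it associates a set of languages. -/
abbrev LangClass : Type 1 := ∀ A : Type, Set (Language A)

/-- A morphism `α : A* → M` recognizes `L` when `L = α⁻¹(F)` for some `F ⊆ M`. -/
def Recognizes {A M : Type} [Monoid M] (α : FreeMonoid A →* M) (L : Language A) : Prop :=
  ∃ F : Set M, L = {w : List A | α (FreeMonoid.ofList w) ∈ F}

/-- A language is regular when it is recognized by a DFA with finitely many states. -/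
def IsRegularLang {A : Type} (L : Language A) : Prop :=
  ∃ (σ : Type) (_ : Fintype σ) (M : DFA A σ), M.accepts = L

/-- `C` is a lattice (of languages): each `C(A)` contains `∅` and `A*` and is closed
under finite union and finite intersection. -/
def IsLatticeClass (C : LangClass) : Prop :=
  ∀ (A : Type) [Fintype A], (⊥ : Language A) ∈ C A ∧ (⊤ : Language A) ∈ C A ∧
    ∀ K L : Language A, K ∈ C A → L ∈ C A → K ⊔ L ∈ C A ∧ K ⊓ L ∈ C A

/-- `C` is quotienting: closed under left and right quotients by words. -/
def IsQuotienting (C : LangClass) : Prop :=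
  ∀ (A : Type) [Fintype A], ∀ L ∈ C A, ∀ u : List A,
    {w : List A | u ++ w ∈ L} ∈ C A ∧ {w : List A | w ++ u ∈ L} ∈ C A

/-- `C` is closed under inverse images of monoid morphisms between free monoids. -/
def ClosedInvImage (C : LangClass) : Prop :=
  ∀ (A B : Type) [Fintype A] [Fintype B] (φ : FreeMonoid A →* FreeMonoid B),
    ∀ L ∈ C B, {w : List A | FreeMonoid.toList (φ (FreeMonoid.ofList w)) ∈ L} ∈ C A

/-- Boolean closure: the least set of languages containing `S` and closed under
Boolean operations (union, intersection, complement). -/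
inductive BoolClosure {A : Type} (S : Set (Language A)) : Language A → Prop
  | base {L : Language A} : L ∈ S → BoolClosure S L
  | compl {L : Language A} : BoolClosure S L → BoolClosure S Lᶜ
  | union {K L : Language A} : BoolClosure S K → BoolClosure S L → BoolClosure S (K ⊔ L)
  | inter {K L : Language A} : BoolClosure S K → BoolClosure S L → BoolClosure S (K ⊓ L)

/-- Polynomial closure: the least set of languages containing `S` and closed under
finite union and marked concatenation `K a L`. -/
inductive PolClosure {A : Type} (S : Set (Language A)) : Language A → Prop
  | base {L : Language A} : L ∈ S → PolClosure S L
  | union {K L : Language A} : PolClosure S K → PolClosure S L → PolClosure S (K ⊔ L)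
  | marked {K L : Language A} (a : A) :
      PolClosure S K → PolClosure S L → PolClosure S (K * {[a]} * L)

/-- Level `k/2` of the concatenation hierarchy of basis `C` (levels are counted in
half units: index `k` is level `k/2`, so `C[0] = C`, `C[n + 1/2] = Pol(C[n])` and
`C[n + 1] = Bool(C[n + 1/2])`). -/
def hlevel (C : LangClass) : ℕ → LangClass
  | 0 => C
  | k + 1 => fun A =>
      if k % 2 = 0 then {L | PolClosure (hlevel C k A) L}
      else {L | BoolClosure (hlevel C k A) L}

/-- `L₁` is `𝒞`-separable from `L₂`: some `K ∈ 𝒞` includes `L₁` and is disjoint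
from `L₂`. -/
def Separable {A : Type} (𝒞 : Set (Language A)) (L₁ L₂ : Language A) : Prop :=
  ∃ K ∈ 𝒞, L₁ ≤ K ∧ L₂ ⊓ K = ⊥

/-- `γ : (A ∪ 𝔼)* → A*`, the morphism erasing the letters of `𝔼`. -/
def eraseE {A : Type} (w : List (A ⊕ Bool)) : List A :=
  w.filterMap (fun x => Sum.elim some (fun _ => none) x)

/-- `λᵤ : A* → (A ∪ 𝔼)*`, the morphism defined by `λᵤ(a) = a · u`. -/
def padWith {A : Type} (u : List Bool) (w : List A) : List (A ⊕ Bool) :=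
  w.flatMap (fun a => Sum.inl a :: u.map Sum.inr)

/-- `D` is an extension of `C`. -/
def Extension (C D : LangClass) : Prop :=
  ∀ (A : Type) [Fintype A],
    (∀ K ∈ C A, {w : List (A ⊕ Bool) | eraseE w ∈ K} ∈ D (A ⊕ Bool)) ∧
    (∀ u : List Bool, ∀ K ∈ D (A ⊕ Bool), {w : List A | padWith u w ∈ K} ∈ C A)

/-- The tagging `P = (τ : 𝔼* → T, G)` fools the class `D`. -/
def Fools {T : Type} [Monoid T] (τ : FreeMonoid Bool →* T) (G : Finset T)
    (D : LangClass) : Prop :=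
  ∀ (A : Type) [Fintype A] (M : Type) [Monoid M] [Fintype M]
    (α : FreeMonoid (A ⊕ Bool) →* M),
    (∀ L : Language (A ⊕ Bool), Recognizes α L → BoolClosure (D (A ⊕ Bool)) L) →
    ∃ s : M, ∀ t ∈ G, ∃ w : List Bool,
      α (FreeMonoid.ofList (w.map Sum.inr)) = s ∧ τ (FreeMonoid.ofList w) = t

open scoped Computability

/-- The basis of the Straubing-Thérien hierarchy: `ST[0](A) = {∅, A*}`. -/
def STbasis : LangClass := fun A => {(⊥ : Language A), (⊤ : Language A)}

section Statement15

variable {A : Type}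

/-- The alphabet `B = A ∪ {#, $}`: the letter `#` is `Sum.inr false` and the letter
`$` is `Sum.inr true`. -/
local notation "B" => (A ⊕ Bool)

/-- A language `H ⊆ A*` viewed as a language over `B`. -/
def embA (H : Language A) : Language (A ⊕ Bool) :=
  {w | ∃ v ∈ H, w = v.map Sum.inl}

/-- The singleton language `{#}`. -/
def hashL : Language (A ⊕ Bool) := {w | w = [Sum.inr false]}

/-- The singleton language `{$}`. -/
def dollarL : Language (A ⊕ Bool) := {w | w = [Sum.inr true]}

/-- The language `A* ⊆ B*`. -/
def AstarL : Language (A ⊕ Bool) := {w | ∀ x ∈ w, ∃ a : A, x = Sum.inl a}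

/-- `(A*$#)*`. -/
def innerL : Language (A ⊕ Bool) := (AstarL * dollarL * hashL)∗

/-- The language `L = #(H'#(A*$#)*)* H #(A*$#)*`. -/
def LangL (H H' : Language A) : Language (A ⊕ Bool) :=
  hashL * (embA H' * hashL * innerL)∗ * embA H * hashL * innerL

/-- The language `L' = #(H'#(A*$#)*)*`. -/
def LangL' (H' : Language A) : Language (A ⊕ Bool) :=
  hashL * (embA H' * hashL * innerL)∗

theorem mem_marked (K L : Language A) (a : A) (w : List A) :
    w ∈ K * {[a]} * L ↔ ∃ u v, u ∈ K ∧ v ∈ L ∧ w = u ++ a :: v := by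
  constructor
  · intro h
    obtain ⟨x, hx, v, hv, rfl⟩ := Language.mem_mul.1 h
    obtain ⟨u, hu, y, hy, rfl⟩ := Language.mem_mul.1 hx
    have : y = [a] := hy
    subst this
    exact ⟨u, v, hu, hv, by simp⟩
  · rintro ⟨u, v, hu, hv, rfl⟩
    refine Language.mem_mul.2 ⟨u ++ [a], Language.mem_mul.2 ⟨u, hu, [a], rfl, rfl⟩, v, hv, by simp⟩

theorem mem_sup' (K L : Language A) (w : List A) : w ∈ K ⊔ L ↔ w ∈ K ∨ w ∈ L := Iff.rfl
theorem mem_inf' (K L : Language A) (w : List A) : w ∈ K ⊓ L ↔ w ∈ K ∧ w ∈ L := Iff.rfl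
theorem mem_compl' (K : Language A) (w : List A) : w ∈ Kᶜ ↔ ¬ w ∈ K := Iff.rfl
theorem mem_bot' (w : List A) : w ∈ (⊥ : Language A) ↔ False := Iff.rfl
theorem mem_top' (w : List A) : w ∈ (⊤ : Language A) ↔ True := Iff.rfl

theorem split_right {p w u v : List A} {a : A} (h : p ++ w = u ++ a :: v) :
    (∃ p', p = u ++ a :: p' ∧ v = p' ++ w) ∨ (∃ s, u = p ++ s ∧ w = s ++ a :: v) := by
  rcases List.append_eq_append_iff.1 h with ⟨s, h1, h2⟩ | ⟨s, h1, h2⟩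
  · exact Or.inr ⟨s, h1, h2⟩
  · cases s with
    | nil => right; exact ⟨[], by simpa using h1.symm, by simpa using h2.symm⟩
    | cons b s =>
      simp only [List.cons_append, List.cons.injEq] at h2
      obtain ⟨rfl, rfl⟩ := h2
      exact Or.inl ⟨s, h1, rfl⟩

theorem split_two {u v u' v' : List A} {a b : A} (h : u ++ a :: v = u' ++ b :: v') :
    (u = u' ∧ a = b ∧ v = v') ∨ (∃ r, u' = u ++ a :: r ∧ v = r ++ b :: v') ∨
      (∃ r, u = u' ++ b :: r ∧ v' = r ++ a :: v) := by
  rcases split_right h with ⟨p, h1, h2⟩ | ⟨s, h1, h2⟩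
  · exact Or.inr (Or.inr ⟨p, h1, h2⟩)
  · cases s with
    | nil =>
      left
      simp only [List.nil_append, List.cons.injEq] at h2
      exact ⟨by simpa using h1.symm, h2⟩
    | cons c s =>
      simp only [List.cons_append, List.cons.injEq] at h2
      obtain ⟨rfl, rfl⟩ := h2
      exact Or.inr (Or.inl ⟨s, h1, rfl⟩)

/-- `S*` for a set of letters. -/
def letL (S : Set A) : Language A := {w | ∀ x ∈ w, x ∈ S}

theorem mem_letL (S : Set A) (w : List A) : w ∈ letL S ↔ ∀ x ∈ w, x ∈ S := Iff.rfl

/-- Basis: empty language and all `S*`. -/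
def ATb (A : Type) : Set (Language A) := {L | L = ⊥ ∨ ∃ S, L = letL S}

/-- Polynomial closure of the `S*`. -/
def PAT (L : Language A) : Prop := PolClosure (ATb A) L

theorem PAT.bot : PAT (⊥ : Language A) := .base (Or.inl rfl)
theorem PAT.star (S : Set A) : PAT (letL S) := .base (Or.inr ⟨S, rfl⟩)
theorem PAT.sup {K L : Language A} (h : PAT K) (h' : PAT L) : PAT (K ⊔ L) := .union h h'
theorem PAT.marked {K L : Language A} (a : A) (h : PAT K) (h' : PAT L) :
    PAT (K * {[a]} * L) := PolClosure.marked a h h'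
theorem PAT.top : PAT (⊤ : Language A) := by
  have : (⊤ : Language A) = letL Set.univ := by
    ext w; simp [mem_top', mem_letL]
  rw [this]; exact PAT.star _

theorem PAT.ite {K : Language A} (c : Prop) (h : PAT K) : PAT ({w | c ∧ w ∈ K} : Language A) := by
  by_cases hc : c
  · have : ({w | c ∧ w ∈ K} : Language A) = K := by
      ext w; exact ⟨fun h => h.2, fun h => ⟨hc, h⟩⟩
    rw [this]; exact h
  · have : ({w | c ∧ w ∈ K} : Language A) = ⊥ := by
      ext w; exact ⟨fun h => hc h.1, fun h => h.elim⟩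
    rw [this]; exact PAT.bot

theorem PAT.biUnion {ι : Type} {F : Set ι} (hF : F.Finite) (f : ι → Language A)
    (h : ∀ i ∈ F, PAT (f i)) : PAT ({w | ∃ i ∈ F, w ∈ f i} : Language A) := by
  induction F, hF using Set.Finite.induction_on with
  | empty =>
    have : ({w | ∃ i ∈ (∅ : Set ι), w ∈ f i} : Language A) = ⊥ := by
      ext w; constructor
      · rintro ⟨i, hi, _⟩; exact hi.elim
      · intro h; exact h.elim
    rw [this]; exact PAT.bot
  | @insert a s ha hs ih =>
    have : ({w | ∃ i ∈ insert a s, w ∈ f i} : Language A) = f a ⊔ {w | ∃ i ∈ s, w ∈ f i} := by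
      ext w; constructor
      · rintro ⟨i, hi | hi, hw⟩
        · subst hi; exact Or.inl hw
        · exact Or.inr ⟨i, hi, hw⟩
      · rintro (h | ⟨i, hi, hw⟩)
        · exact ⟨a, Or.inl rfl, h⟩
        · exact ⟨i, Or.inr hi, hw⟩
    rw [this]
    exact PAT.sup (h a (Or.inl rfl)) (ih fun i hi => h i (Or.inr hi))

/-- Monomials. -/
def mono (S : Set A) : List (Set A × A) → Language A
  | [] => letL S
  | x :: l => letL x.1 * {[x.2]} * mono S l

theorem PAT.mono (S : Set A) (l : List (Set A × A)) : PAT (mono S l) := by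
  induction l with
  | nil => exact PAT.star S
  | cons x l ih => exact PAT.marked _ (PAT.star _) ih

theorem mono_marked (S S' : Set A) (l l' : List (Set A × A)) (a : A) :
    mono S l * {[a]} * mono S' l' = mono S' (l ++ (S, a) :: l') := by
  induction l with
  | nil => rfl
  | cons x l ih =>
    simp only [mono, List.cons_append, ← ih, mul_assoc]

theorem PAT.normal {L : Language A} (h : PAT L) :
    ∃ F : Set (Set A × List (Set A × A)), F.Finite ∧ ∀ w, w ∈ L ↔ ∃ m ∈ F, w ∈ _root_.mono m.1 m.2 := by
  induction h with
  | base h =>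
    rcases h with rfl | ⟨S, rfl⟩
    · exact ⟨∅, Set.finite_empty, fun w => by simp [mem_bot']⟩
    · exact ⟨{(S, [])}, Set.finite_singleton _, fun w => by simp [_root_.mono]⟩
  | union _ _ ih ih' =>
    obtain ⟨F, hF, h⟩ := ih
    obtain ⟨F', hF', h'⟩ := ih'
    refine ⟨F ∪ F', hF.union hF', fun w => ?_⟩
    rw [mem_sup', h, h']
    constructor
    · rintro (⟨m, hm, hw⟩ | ⟨m, hm, hw⟩)
      · exact ⟨m, Or.inl hm, hw⟩
      · exact ⟨m, Or.inr hm, hw⟩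
    · rintro ⟨m, hm | hm, hw⟩
      · exact Or.inl ⟨m, hm, hw⟩
      · exact Or.inr ⟨m, hm, hw⟩
  | marked a _ _ ih ih' =>
    obtain ⟨F, hF, h⟩ := ih
    obtain ⟨F', hF', h'⟩ := ih'
    refine ⟨Set.image2 (fun m m' => (m'.1, m.2 ++ (m.1, a) :: m'.2)) F F',
      hF.image2 _ hF', fun w => ?_⟩
    rw [mem_marked]
    constructor
    · rintro ⟨u, v, hu, hv, rfl⟩
      obtain ⟨m, hm, hu⟩ := (h u).1 hu
      obtain ⟨m', hm', hv⟩ := (h' v).1 hv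
      refine ⟨_, ⟨m, hm, m', hm', rfl⟩, ?_⟩
      simp only
      rw [← mono_marked, mem_marked]
      exact ⟨u, v, hu, hv, rfl⟩
    · rintro ⟨_, ⟨m, hm, m', hm', rfl⟩, hw⟩
      simp only at hw
      rw [← mono_marked, mem_marked] at hw
      obtain ⟨u, v, hu, hv, rfl⟩ := hw
      exact ⟨u, v, (h u).2 ⟨m, hm, hu⟩, (h' v).2 ⟨m', hm', hv⟩, rfl⟩

theorem inter_star (T S : Set A) (l : List (Set A × A)) : PAT (letL T ⊓ mono S l) := by
  induction l with
  | nil =>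
    have : letL T ⊓ mono S [] = letL (T ∩ S) := by
      ext w
      simp only [mono, mem_inf', mem_letL, Set.mem_inter_iff]
      grind
    rw [this]; exact PAT.star _
  | cons x l ih =>
    have : letL T ⊓ mono S (x :: l) =
        {w | x.2 ∈ T ∧ w ∈ letL (T ∩ x.1) * {[x.2]} * (letL T ⊓ mono S l)} := by
      ext w
      change _ ↔ x.2 ∈ T ∧ w ∈ letL (T ∩ x.1) * {[x.2]} * (letL T ⊓ mono S l)
      simp only [mono, mem_inf', mem_marked]
      constructor
      · rintro ⟨h, u, v, hu, hv, rfl⟩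
        simp only [mem_letL] at *
        exact ⟨h _ (by simp), u, v, fun y hy => ⟨h y (by simp [hy]), hu y hy⟩,
          ⟨fun y hy => h y (by simp [hy]), hv⟩, rfl⟩
      · rintro ⟨h, u, v, hu, ⟨hv, hv'⟩, rfl⟩
        refine ⟨?_, u, v, fun y hy => (hu y hy).2, hv', rfl⟩
        intro y hy
        simp only [List.mem_append, List.mem_cons] at hy
        rcases hy with hy | rfl | hy
        · exact (hu y hy).1
        · exact h
        · exact hv y hy
    rw [this]
    exact PAT.ite _ (PAT.marked _ (PAT.star _) ih)

theorem letL_inter {T S : Set A} {w : List A} (h : w ∈ letL T) (h' : w ∈ letL S) :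
    w ∈ letL (T ∩ S) := fun y hy => ⟨h y hy, h' y hy⟩

theorem letL_append_cons {T : Set A} {u v : List A} {a : A} :
    u ++ a :: v ∈ letL T ↔ u ∈ letL T ∧ a ∈ T ∧ v ∈ letL T := by
  simp only [mem_letL, List.mem_append, List.mem_cons]
  grind

theorem inter_mono (S S' : Set A) (l l' : List (Set A × A)) : PAT (mono S l ⊓ mono S' l') := by
  induction l generalizing l' with
  | nil => exact inter_star _ _ _
  | cons x l ih =>
    induction l' with
    | nil => rw [inf_comm]; exact inter_star _ _ _
    | cons y l' ih' =>
      obtain ⟨T, a⟩ := x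
      obtain ⟨T', b⟩ := y
      have : mono S ((T, a) :: l) ⊓ mono S' ((T', b) :: l') =
        ({w | a ∈ T' ∧ w ∈ letL (T ∩ T') * {[a]} * (mono S l ⊓ mono S' ((T', b) :: l'))} ⊔
         {w | b ∈ T ∧ w ∈ letL (T ∩ T') * {[b]} * (mono S ((T, a) :: l) ⊓ mono S' l')}) ⊔
         {w | a = b ∧ w ∈ letL (T ∩ T') * {[a]} * (mono S l ⊓ mono S' l')} := by
        ext w
        change w ∈ mono S ((T, a) :: l) ∧ w ∈ mono S' ((T', b) :: l') ↔
          ((a ∈ T' ∧ w ∈ letL (T ∩ T') * {[a]} * (mono S l ⊓ mono S' ((T', b) :: l'))) ∨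
          (b ∈ T ∧ w ∈ letL (T ∩ T') * {[b]} * (mono S ((T, a) :: l) ⊓ mono S' l'))) ∨
          (a = b ∧ w ∈ letL (T ∩ T') * {[a]} * (mono S l ⊓ mono S' l'))
        simp only [mono, mem_inf', mem_marked]
        constructor
        · rintro ⟨⟨u, v, hu, hv, rfl⟩, u', v', hu', hv', he⟩
          rcases split_two he with ⟨rfl, rfl, rfl⟩ | ⟨r, rfl, rfl⟩ | ⟨r, rfl, rfl⟩
          · exact Or.inr ⟨rfl, u, v, letL_inter hu hu', ⟨hv, hv'⟩, rfl⟩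
          · rw [letL_append_cons] at hu'
            exact Or.inl (Or.inl ⟨hu'.2.1, u, _, letL_inter hu hu'.1,
              ⟨hv, r, v', hu'.2.2, hv', rfl⟩, rfl⟩)
          · rw [letL_append_cons] at hu
            exact Or.inl (Or.inr ⟨hu.2.1, u', _, letL_inter hu.1 hu',
              ⟨⟨r, v, hu.2.2, hv, rfl⟩, hv'⟩, by simp⟩)
        · rintro ((⟨h, u, _, hu, ⟨hv, r, v', hr, hv', rfl⟩, rfl⟩ |
            ⟨h, u, _, hu, ⟨⟨r, v', hr, hv', rfl⟩, hv⟩, rfl⟩) | ⟨rfl, u, v, hu, ⟨hv, hv'⟩, rfl⟩)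
          · exact ⟨⟨u, _, fun y hy => (hu y hy).1, hv, rfl⟩, u ++ a :: r, v',
              letL_append_cons.2 ⟨fun y hy => (hu y hy).2, h, hr⟩, hv', by simp⟩
          · exact ⟨⟨u ++ b :: r, v', letL_append_cons.2 ⟨fun y hy => (hu y hy).1, h, hr⟩, hv',
              by simp⟩, u, _, fun y hy => (hu y hy).2, hv, rfl⟩
          · exact ⟨⟨u, v, fun y hy => (hu y hy).1, hv, rfl⟩, u, v, fun y hy => (hu y hy).2, hv', rfl⟩
      rw [this]
      exact ((PAT.ite _ (PAT.marked _ (PAT.star _) (ih _))).sup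
        (PAT.ite _ (PAT.marked _ (PAT.star _) ih'))).sup
        (PAT.ite _ (PAT.marked _ (PAT.star _) (ih _)))

theorem PAT.inf {K L : Language A} (h : PAT K) (h' : PAT L) : PAT (K ⊓ L) := by
  obtain ⟨F, hF, h⟩ := h.normal
  obtain ⟨F', hF', h'⟩ := h'.normal
  have : K ⊓ L = {w | ∃ i ∈ F, w ∈ ({w | ∃ j ∈ F', w ∈ _root_.mono i.1 i.2 ⊓ _root_.mono j.1 j.2} : Language A)} := by
    ext w
    rw [mem_inf', h, h']
    constructor
    · rintro ⟨⟨m, hm, hw⟩, m', hm', hw'⟩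
      exact ⟨m, hm, m', hm', hw, hw'⟩
    · rintro ⟨m, hm, m', hm', hw, hw'⟩
      exact ⟨⟨m, hm, hw⟩, m', hm', hw'⟩
  rw [this]
  exact PAT.biUnion hF _ fun i _ => PAT.biUnion hF' _ fun j _ => inter_mono _ _ _ _

theorem PAT.biInter {F : Set (Language A)} (hF : F.Finite)
    (h : ∀ P ∈ F, PAT P) : PAT ({w | ∀ P ∈ F, w ∈ P} : Language A) := by
  induction F, hF using Set.Finite.induction_on with
  | empty =>
    have : ({w | ∀ P ∈ (∅ : Set (Language A)), w ∈ P} : Language A) = ⊤ := by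
      ext w; exact ⟨fun _ => trivial, fun _ P hP => hP.elim⟩
    rw [this]; exact PAT.top
  | @insert a s ha hs ih =>
    have : ({w | ∀ P ∈ insert a s, w ∈ P} : Language A) = a ⊓ {w | ∀ P ∈ s, w ∈ P} := by
      ext w; constructor
      · intro h; exact ⟨h a (Or.inl rfl), fun P hP => h P (Or.inr hP)⟩
      · rintro ⟨h1, h2⟩ P (rfl | hP)
        · exact h1
        · exact h2 P hP
    rw [this]
    exact PAT.inf (h a (Or.inl rfl)) (ih fun i hi => h i (Or.inr hi))

/-- Words without subword `u`. -/
def noSub (u : List A) : Language A := {w | ¬ List.Sublist u w}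

/-- Words with a letter in `F`. -/
def hasL (F : Set A) : Language A := {w | ∃ x ∈ F, x ∈ w}

theorem PAT.compl_sub (u : List A) : PAT (noSub u) := by
  induction u with
  | nil =>
    have : noSub ([] : List A) = ⊥ := by
      ext w; exact ⟨fun h => h (List.nil_sublist _), fun h => h.elim⟩
    rw [this]; exact PAT.bot
  | cons a u ih =>
    have : noSub (a :: u) =
        letL {a}ᶜ ⊔ letL {a}ᶜ * {[a]} * noSub u := by
      ext w
      rw [mem_sup', mem_marked]
      change ¬ List.Sublist (a :: u) w ↔ _
      constructor
      · intro h
        by_cases ha : a ∈ w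
        · obtain ⟨s, t, rfl, hs⟩ := List.eq_append_cons_of_mem ha
          refine Or.inr ⟨s, t, fun y hy hya => ?_, ?_, rfl⟩
          · have : y = a := hya
            subst this; exact hs hy
          · intro (hh : List.Sublist u t)
            exact h ((hh.cons_cons a).trans (List.sublist_append_right _ _))
        · refine Or.inl fun y hy hya => ?_
          have : y = a := hya
          subst this; exact ha hy
      · rintro (h | ⟨s, t, hs, ht, rfl⟩) hh
        · exact h a (hh.subset (by simp)) rfl
        · apply ht
          rw [List.cons_sublist_iff] at hh
          obtain ⟨r1, r2, he, ha, hr⟩ := hh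
          change List.Sublist u t
          rcases split_right he.symm with ⟨p, h1, h2⟩ | ⟨p, h1, h2⟩
          · rw [h2]; exact hr.trans (List.sublist_append_right _ _)
          · exact absurd rfl (hs a (by rw [h1]; simp [ha]))
    rw [this]
    exact (PAT.star _).sup (PAT.marked _ (PAT.star _) ih)

theorem pol_triv_normal {L : Language A} (h : PolClosure (STbasis A) L) :
    ∃ F : Set (List A), F.Finite ∧ ∀ w, w ∈ L ↔ ∃ u ∈ F, List.Sublist u w := by
  induction h with
  | base h =>
    rcases h with rfl | rfl
    · exact ⟨∅, Set.finite_empty, fun w => by simp [mem_bot']⟩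
    · exact ⟨{[]}, Set.finite_singleton _, fun w => by simp [mem_top']⟩
  | union _ _ ih ih' =>
    obtain ⟨F, hF, h⟩ := ih
    obtain ⟨F', hF', h'⟩ := ih'
    refine ⟨F ∪ F', hF.union hF', fun w => ?_⟩
    rw [mem_sup', h, h']
    constructor
    · rintro (⟨m, hm, hw⟩ | ⟨m, hm, hw⟩)
      · exact ⟨m, Or.inl hm, hw⟩
      · exact ⟨m, Or.inr hm, hw⟩
    · rintro ⟨m, hm | hm, hw⟩
      · exact Or.inl ⟨m, hm, hw⟩
      · exact Or.inr ⟨m, hm, hw⟩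
  | marked a _ _ ih ih' =>
    obtain ⟨F, hF, h⟩ := ih
    obtain ⟨F', hF', h'⟩ := ih'
    refine ⟨Set.image2 (fun m m' => m ++ a :: m') F F', hF.image2 _ hF', fun w => ?_⟩
    rw [mem_marked]
    constructor
    · rintro ⟨u, v, hu, hv, rfl⟩
      obtain ⟨m, hm, hu⟩ := (h u).1 hu
      obtain ⟨m', hm', hv⟩ := (h' v).1 hv
      exact ⟨_, ⟨m, hm, m', hm', rfl⟩, hu.append (hv.cons_cons a)⟩
    · rintro ⟨_, ⟨m, hm, m', hm', rfl⟩, hw⟩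
      obtain ⟨r1, r2, rfl, h1, h2⟩ := List.append_sublist_iff.1 hw
      obtain ⟨s1, s2, rfl, h3, h4⟩ := List.cons_sublist_iff.1 h2
      obtain ⟨s, t, rfl⟩ := List.append_of_mem h3
      exact ⟨r1 ++ s, t ++ s2, (h _).2 ⟨m, hm, h1.trans (List.sublist_append_left _ _)⟩,
        (h' _).2 ⟨m', hm', h4.trans (List.sublist_append_right _ _)⟩, by simp⟩

theorem PAT.of_triv {L : Language A} (h : PolClosure (STbasis A) L) : PAT L := by
  induction h with
  | base h =>
    rcases h with rfl | rfl
    · exact PAT.bot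
    · exact PAT.top
  | union _ _ ih ih' => exact ih.sup ih'
  | marked a _ _ ih ih' => exact ih.marked a ih'

theorem PAT.of_triv_compl {L : Language A} (h : PolClosure (STbasis A) L) : PAT Lᶜ := by
  obtain ⟨F, hF, h⟩ := pol_triv_normal h
  have : Lᶜ = {w | ∀ P ∈ noSub '' F, w ∈ P} := by
    ext w
    rw [mem_compl', h]
    constructor
    · rintro h _ ⟨u, hu, rfl⟩ hw
      exact h ⟨u, hu, hw⟩
    · rintro h ⟨u, hu, hw⟩
      exact h _ ⟨u, hu, rfl⟩ hw
  rw [this]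
  apply PAT.biInter (hF.image _)
  rintro _ ⟨u, _, rfl⟩
  exact PAT.compl_sub u

theorem hl1 : hlevel STbasis 1 A = {L | PolClosure (STbasis A) L} := by simp [hlevel]
theorem hl2 : hlevel STbasis 2 A = {L | BoolClosure (hlevel STbasis 1 A) L} := by simp [hlevel]
theorem hl3 : hlevel STbasis 3 A = {L | PolClosure (hlevel STbasis 2 A) L} := by simp [hlevel]
theorem hl4 : hlevel STbasis 4 A = {L | BoolClosure (hlevel STbasis 3 A) L} := by simp [hlevel]

theorem PAT.of_bool {L : Language A} (h : BoolClosure (hlevel STbasis 1 A) L) :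
    PAT L ∧ PAT Lᶜ := by
  induction h with
  | base h => rw [hl1] at h; exact ⟨PAT.of_triv h, PAT.of_triv_compl h⟩
  | compl _ ih => rw [compl_compl]; exact ih.symm
  | union _ _ ih ih' => rw [compl_sup]; exact ⟨ih.1.sup ih'.1, ih.2.inf ih'.2⟩
  | inter _ _ ih ih' => rw [compl_inf]; exact ⟨ih.1.inf ih'.1, ih.2.sup ih'.2⟩

theorem PAT.of_level3 {L : Language A} (h : L ∈ hlevel STbasis 3 A) : PAT L := by
  rw [hl3] at h
  replace h : PolClosure _ L := h
  induction h with
  | base h' => rw [hl2] at h'; exact (PAT.of_bool h').1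
  | union _ _ ih ih' => exact ih.sup ih'
  | marked a _ _ ih ih' => exact ih.marked a ih'

theorem pol_bot : PolClosure (STbasis A) (⊥ : Language A) := .base (Or.inl rfl)
theorem pol_top : PolClosure (STbasis A) (⊤ : Language A) := .base (Or.inr rfl)

theorem letL_level2 [Finite A] (S : Set A) : letL S ∈ hlevel STbasis 2 A := by
  have key : ∀ F : Set A, F.Finite → PolClosure (STbasis A) (hasL F) := by
    intro F hF
    induction F, hF using Set.Finite.induction_on with
    | empty =>
      have : hasL (∅ : Set A) = ⊥ := by
        ext w; exact ⟨fun ⟨_, h, _⟩ => h.elim, fun h => h.elim⟩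
      rw [this]; exact pol_bot
    | @insert a s ha hs ih =>
      have : hasL (insert a s) = ((⊤ : Language A) * {[a]} * (⊤ : Language A)) ⊔ hasL s := by
        ext w
        rw [mem_sup', mem_marked]
        constructor
        · rintro ⟨x, rfl | hx, hw⟩
          · obtain ⟨s, t, rfl⟩ := List.append_of_mem hw
            exact Or.inl ⟨s, t, trivial, trivial, rfl⟩
          · exact Or.inr ⟨x, hx, hw⟩
        · rintro (⟨s, t, _, _, rfl⟩ | ⟨x, hx, hw⟩)
          · exact ⟨a, Or.inl rfl, by simp⟩
          · exact ⟨x, Or.inr hx, hw⟩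
      rw [this]
      exact .union (.marked a pol_top pol_top) ih
  have : letL S = (hasL Sᶜ)ᶜ := by
    ext w
    rw [mem_compl', mem_letL]
    change _ ↔ ¬ ∃ x ∈ Sᶜ, x ∈ w
    simp only [Set.mem_compl_iff]
    grind
  rw [this, hl2]
  refine BoolClosure.compl (.base ?_)
  rw [hl1]
  exact key _ (Set.toFinite _)

theorem PAT.level3 [Finite A] {L : Language A} (h : PAT L) : L ∈ hlevel STbasis 3 A := by
  rw [hl3]
  change PolClosure _ L
  induction h with
  | base h =>
    rcases h with rfl | ⟨S, rfl⟩
    · refine .base ?_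
      rw [hl2]
      refine BoolClosure.base ?_
      rw [hl1]; exact pol_bot
    · exact .base (letL_level2 S)
  | union _ _ ih ih' => exact .union ih ih'
  | marked a _ _ ih ih' => exact .marked a ih ih'

/-- Finite family controlling contexts. -/
theorem context_family {K : Language (A ⊕ Bool)} (h : PAT K) :
    ∃ F : Set (Language A), F.Finite ∧ (∀ P ∈ F, PAT P) ∧
      ∀ h h' : List A, (∀ P ∈ F, h ∈ P → h' ∈ P) → ∀ p q : List (A ⊕ Bool),
        p ++ (h.map Sum.inl ++ q) ∈ K → p ++ (h'.map Sum.inl ++ q) ∈ K := by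
  induction h with
  | base h =>
    rcases h with rfl | ⟨S, rfl⟩
    · exact ⟨∅, Set.finite_empty, fun _ h => h.elim, fun _ _ _ _ _ h => h.elim⟩
    · refine ⟨{letL (Sum.inl ⁻¹' S)}, Set.finite_singleton _, ?_, ?_⟩
      · rintro _ rfl; exact PAT.star _
      · intro h h' hh p q hp
        have := hh _ rfl
        simp only [mem_letL, List.mem_append, List.mem_map, Set.mem_preimage] at *
        grind
  | union _ _ ih ih' =>
    obtain ⟨F, hF, hP, H⟩ := ih
    obtain ⟨F', hF', hP', H'⟩ := ih'
    refine ⟨F ∪ F', hF.union hF', ?_, ?_⟩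
    · rintro P (h | h)
      · exact hP P h
      · exact hP' P h
    · rintro h h' hh p q (hp | hp)
      · exact Or.inl (H h h' (fun P hP => hh P (Or.inl hP)) p q hp)
      · exact Or.inr (H' h h' (fun P hP => hh P (Or.inr hP)) p q hp)
  | @marked K L a _ _ ih ih' =>
    obtain ⟨F, hF, hP, H⟩ := ih
    obtain ⟨F', hF', hP', H'⟩ := ih'
    let I : Set (Language A) → Language A := fun X => {w | ∀ P ∈ X, w ∈ P}
    let G : Set (Language A) :=
      {M | ∃ b : A, a = Sum.inl b ∧ ∃ X ∈ 𝒫 F, ∃ Y ∈ 𝒫 F', M = I X * {[b]} * I Y}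
    have hG : G.Finite := by
      rcases a with b | c
      · refine (Set.Finite.image2 (fun X Y => I X * {[b]} * I Y) hF.finite_subsets
          hF'.finite_subsets).subset ?_
        rintro _ ⟨b', hb, X, hX, Y, hY, rfl⟩
        cases hb
        exact ⟨X, hX, Y, hY, rfl⟩
      · refine Set.finite_empty.subset ?_
        rintro _ ⟨b', hb, _⟩
        cases hb
    refine ⟨F ∪ F' ∪ G, (hF.union hF').union hG, ?_, ?_⟩
    · rintro P ((h | h) | ⟨b, -, X, hX, Y, hY, rfl⟩)
      · exact hP P h
      · exact hP' P h
      · exact PAT.marked _ (PAT.biInter (hF.subset hX) fun P h => hP P (hX h))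
          (PAT.biInter (hF'.subset hY) fun P h => hP' P (hY h))
    · intro h h' hh p q hp
      have h1 := H h h' (fun P hP => hh P (Or.inl (Or.inl hP)))
      have h2 := H' h h' (fun P hP => hh P (Or.inl (Or.inr hP)))
      rw [mem_marked] at hp ⊢
      obtain ⟨u, v, hu, hv, he⟩ := hp
      rcases split_right he with ⟨p', rfl, rfl⟩ | ⟨s, rfl, he2⟩
      · exact ⟨u, _, hu, h2 p' q hv, by simp⟩
      · rcases split_right he2 with ⟨t, h3, rfl⟩ | ⟨t, rfl, rfl⟩
        · obtain ⟨s, r, rfl, rfl, h4⟩ := List.map_eq_append_iff.1 h3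
          obtain ⟨b, t, rfl, rfl, rfl⟩ := List.map_eq_cons_iff.1 h4
          have h5 := hh (I {P ∈ F | s ∈ P} * {[b]} * I {P ∈ F' | t ∈ P})
            (Or.inr ⟨b, rfl, _, fun P hP => hP.1, _, fun P hP => hP.1, rfl⟩)
          rw [mem_marked, mem_marked] at h5
          obtain ⟨s', t', hs', ht', rfl⟩ :=
            h5 ⟨s, t, fun P hP => hP.2, fun P hP => hP.2, rfl⟩
          have h6 := H s s' (fun P hP hs => hs' P ⟨hP, hs⟩) p [] (by simpa using hu)
          have h7 := H' t t' (fun P hP hs => ht' P ⟨hP, hs⟩) [] q (by simpa using hv)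
          exact ⟨_, _, h6, h7, by simp⟩
        · exact ⟨_, v, h1 p t (by simpa using hu), hv, by simp⟩

/-- `x^n`. -/
def rep (x : List A) : ℕ → List A
  | 0 => []
  | n + 1 => x ++ rep x n

theorem rep_add (x : List A) (m n : ℕ) : rep x (m + n) = rep x m ++ rep x n := by
  induction m with
  | zero => simp [rep]
  | succ m ih => rw [Nat.succ_add]; simp [rep, ih]

theorem rep_succ' (x : List A) (n : ℕ) : rep x (n + 1) = rep x n ++ x := by
  rw [rep_add]; simp [rep]

theorem rep_split (x : List A) (n : ℕ) (s t : List A) (a : A) (h : rep x n = s ++ a :: t) :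
    ∃ j i s' t', n = j + 1 + i ∧ s = rep x j ++ s' ∧ t = t' ++ rep x i ∧ x = s' ++ a :: t' := by
  induction n generalizing s with
  | zero => simp [rep] at h
  | succ n ih =>
    rcases split_right (show x ++ rep x n = s ++ a :: t from h) with ⟨p, h1, h2⟩ | ⟨p, h1, h2⟩
    · exact ⟨0, n, s, p, by omega, by simp [rep], h2, h1⟩
    · obtain ⟨j, i, s', t', h3, h4, h5, h6⟩ := ih p h2
      exact ⟨j + 1, i, s', t', by omega, by rw [h1, h4]; simp [rep], h5, h6⟩

theorem pump {K : Language A} (h : PAT K) :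
    ∃ N, ∀ n ≥ N, ∀ x : List A, (∀ a, a ∈ x) → ∀ p q y,
      p ++ (rep x n ++ q) ∈ K → p ++ (rep x n ++ (y ++ (rep x n ++ q))) ∈ K := by
  induction h with
  | base h =>
    rcases h with rfl | ⟨S, rfl⟩
    · exact ⟨0, fun _ _ _ _ _ _ _ h => h.elim⟩
    · refine ⟨1, ?_⟩
      rintro (_ | n) hn x hx p q y hp
      · omega
      · intro b _
        exact hp b (by simp [rep, hx b])
  | union _ _ ih ih' =>
    obtain ⟨N, H⟩ := ih
    obtain ⟨N', H'⟩ := ih'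
    refine ⟨max N N', ?_⟩
    rintro n hn x hx p q y (hp | hp)
    · exact Or.inl (H n (le_trans (le_max_left _ _) hn) x hx p q y hp)
    · exact Or.inr (H' n (le_trans (le_max_right _ _) hn) x hx p q y hp)
  | @marked K L a _ _ ih ih' =>
    obtain ⟨N, H⟩ := ih
    obtain ⟨N', H'⟩ := ih'
    refine ⟨N + N', ?_⟩
    intro n hn x hx p q y hp
    rw [mem_marked] at hp ⊢
    obtain ⟨u, v, hu, hv, he⟩ := hp
    rcases split_right he with ⟨p', rfl, rfl⟩ | ⟨s, rfl, he2⟩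
    · exact ⟨u, _, hu, H' n (by omega) x hx p' q y hv, by simp⟩
    · rcases split_right he2 with ⟨t, h3, rfl⟩ | ⟨t, rfl, rfl⟩
      · obtain ⟨j, i, s', t', hn', rfl, rfl, hx'⟩ := rep_split x n s t a h3
        by_cases hj : N ≤ j
        · refine ⟨_, _, H j hj x hx p s' (rep x (1 + i) ++ y) hu, hv, ?_⟩
          have e1 : rep x n = rep x j ++ rep x (1 + i) := by rw [← rep_add]; congr 1; omega
          have e2 : rep x n = rep x j ++ (s' ++ a :: (t' ++ rep x i)) := by
            rw [h3]; simp
          calc p ++ (rep x n ++ (y ++ (rep x n ++ q)))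
              = p ++ ((rep x j ++ rep x (1 + i)) ++ (y ++
                ((rep x j ++ (s' ++ a :: (t' ++ rep x i))) ++ q))) := by rw [← e1, ← e2]
            _ = _ := by simp
        · refine ⟨_, _, hu, H' i (by omega) x hx t' q (y ++ rep x (j + 1)) (by simpa using hv), ?_⟩
          have e1 : rep x n = rep x (j + 1) ++ rep x i := by rw [← rep_add]; congr 1
          have e2 : rep x n = (rep x j ++ s') ++ a :: (t' ++ rep x i) := by
            rw [h3]
          calc p ++ (rep x n ++ (y ++ (rep x n ++ q)))
              = p ++ (((rep x j ++ s') ++ a :: (t' ++ rep x i)) ++ (y ++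
                ((rep x (j + 1) ++ rep x i) ++ q))) := by rw [← e1, ← e2]
            _ = _ := by simp
      · exact ⟨_, v, H n (by omega) x hx p t y (by simpa using hu), hv, by simp⟩

theorem PAT.emb {K : Language A} (h : PAT K) : PAT (embA K) := by
  induction h with
  | base h =>
    rcases h with rfl | ⟨S, rfl⟩
    · have : embA (⊥ : Language A) = ⊥ := by
        ext w; exact ⟨fun ⟨_, h, _⟩ => h.elim, fun h => h.elim⟩
      rw [this]; exact PAT.bot
    · have : embA (letL S) = letL (Sum.inl '' S) := by
        ext w
        constructor
        · rintro ⟨v, hv, rfl⟩ x hx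
          obtain ⟨a, ha, rfl⟩ := List.mem_map.1 hx
          exact ⟨a, hv a ha, rfl⟩
        · intro h
          induction w with
          | nil => exact ⟨[], fun x hx => by simp at hx, rfl⟩
          | cons b w ih =>
            obtain ⟨a, ha, rfl⟩ := h b (by simp)
            obtain ⟨v, hv, rfl⟩ := ih fun x hx => h x (by simp [hx])
            refine ⟨a :: v, fun x hx => ?_, rfl⟩
            rcases List.mem_cons.1 hx with rfl | hx
            · exact ha
            · exact hv x hx
      rw [this]; exact PAT.star _
  | @union K L _ _ ih ih' =>
    have : embA (K ⊔ L) = embA K ⊔ embA L := by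
      ext w
      constructor
      · rintro ⟨v, hv | hv, rfl⟩
        · exact Or.inl ⟨v, hv, rfl⟩
        · exact Or.inr ⟨v, hv, rfl⟩
      · rintro (⟨v, hv, rfl⟩ | ⟨v, hv, rfl⟩)
        · exact ⟨v, Or.inl hv, rfl⟩
        · exact ⟨v, Or.inr hv, rfl⟩
    rw [this]; exact ih.sup ih'
  | @marked K L a _ _ ih ih' =>
    have : embA (K * {[a]} * L) = embA K * {[Sum.inl a]} * embA L := by
      ext w
      rw [mem_marked]
      constructor
      · rintro ⟨v, hv, rfl⟩
        obtain ⟨s, t, hs, ht, rfl⟩ := (mem_marked _ _ _ _).1 hv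
        exact ⟨_, _, ⟨s, hs, rfl⟩, ⟨t, ht, rfl⟩, by simp⟩
      · rintro ⟨_, _, ⟨s, hs, rfl⟩, ⟨t, ht, rfl⟩, rfl⟩
        exact ⟨s ++ a :: t, (mem_marked _ _ _ _).2 ⟨s, t, hs, ht, rfl⟩, by simp⟩
    rw [this]; exact ih.marked _ ih'

theorem blocks (c : A) (Q : List A → Prop) (Ls : List (List A))
    (hL : ∀ y ∈ Ls, ∃ b, y = b ++ [c] ∧ c ∉ b ∧ Q b) (p k q : List A)
    (he : c :: Ls.flatten = p ++ c :: (k ++ c :: q)) (hk : c ∉ k) : Q k := by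
  induction Ls generalizing p with
  | nil =>
    have := congrArg List.length he
    simp at this
    omega
  | cons y Ls ih =>
    obtain ⟨b, rfl, hb, hQ⟩ := hL y (by simp)
    cases p with
    | nil =>
      simp only [List.flatten_cons, List.append_assoc, List.cons_append, List.nil_append,
        List.cons.injEq, true_and] at he
      rcases split_two he with ⟨rfl, -, -⟩ | ⟨r, rfl, -⟩ | ⟨r, rfl, -⟩
      · exact hQ
      · simp at hk
      · simp at hb
    | cons d p =>
      simp only [List.flatten_cons, List.append_assoc, List.cons_append, List.nil_append,
        List.cons.injEq] at he
      rcases split_right he.2 with ⟨r, rfl, -⟩ | ⟨r, rfl, h⟩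
      · simp at hb
      · exact ih (fun y hy => hL y (by simp [hy])) r h

theorem LangL'_end (H' : Language A) : LangL' H' ≤ (⊤ : Language (A ⊕ Bool)) * hashL := by
  have key : ∀ Y : Language (A ⊕ Bool), Y * hashL ≤ (⊤ : Language (A ⊕ Bool)) * hashL := fun Y => by
    gcongr; exact le_top
  have hin : ∀ Y : Language (A ⊕ Bool), Y * hashL * innerL ≤ (⊤ : Language (A ⊕ Bool)) * hashL := by
    intro Y
    refine mul_kstar_le (key _) ?_
    rw [← mul_assoc]; exact key _
  refine mul_kstar_le ?_ ?_
  · have := key 1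
    rwa [one_mul] at this
  · have := hin ((⊤ : Language (A ⊕ Bool)) * hashL * embA H')
    simpa only [mul_assoc] using this

theorem LangL'_blocks (H' : Language A) :
    LangL' H' ≤ hashL * ((embA H' + AstarL * dollarL) * hashL)∗ := by
  set D : Language (A ⊕ Bool) := (embA H' + AstarL * dollarL) * hashL with hD
  have h1 : embA H' * hashL ≤ D∗ := by
    refine le_trans ?_ le_kstar
    rw [hD, add_mul]
    exact fun w hw => Or.inl hw
  have h2 : innerL ≤ D∗ := by
    refine kstar_mono ?_
    rw [hD, add_mul]
    exact fun w hw => Or.inr hw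
  have h3 : embA H' * hashL * innerL ≤ D∗ := by
    calc embA H' * hashL * innerL ≤ D∗ * D∗ := by gcongr
      _ = D∗ := kstar_mul_kstar D
  have h4 : (embA H' * hashL * innerL)∗ ≤ D∗ := by
    have := kstar_mono h3
    rwa [kstar_idem] at this
  unfold LangL'
  gcongr

theorem forward [Finite A] {H H' : Language A} (h : Separable (hlevel STbasis 3 A) H H') :
    Separable (hlevel STbasis 4 (A ⊕ Bool)) (LangL H H') (LangL' H') := by
  obtain ⟨K, hK, hH, hH'⟩ := h
  have hK := PAT.of_level3 hK
  refine ⟨((⊤ : Language (A ⊕ Bool)) * {[Sum.inr false]} * embA K) * {[Sum.inr false]} *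
    (⊤ : Language (A ⊕ Bool)), ?_, ?_, ?_⟩
  · rw [hl4]
    exact BoolClosure.base (PAT.level3 ((PAT.top.marked _ hK.emb).marked _ PAT.top))
  · intro w hw
    obtain ⟨w1, hw1, i, hi, rfl⟩ := Language.mem_mul.1 hw
    obtain ⟨w2, hw2, x, hx, rfl⟩ := Language.mem_mul.1 hw1
    obtain ⟨w3, hw3, k, hk, rfl⟩ := Language.mem_mul.1 hw2
    obtain ⟨t, -, z, hz, rfl⟩ := Language.mem_mul.1 (LangL'_end H' hw3)
    have hz : z = [Sum.inr false] := hz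
    have hx : x = [Sum.inr false] := hx
    subst hz hx
    obtain ⟨k, hk, rfl⟩ := hk
    refine (mem_marked _ _ _ _).2 ⟨_, i, (mem_marked _ _ _ _).2
      ⟨t, k.map Sum.inl, trivial, ⟨k, hH hk, rfl⟩, rfl⟩, trivial, by simp⟩
  · refine le_antisymm ?_ bot_le
    rintro w ⟨hw, hw'⟩
    obtain ⟨s, q, hs, -, rfl⟩ := (mem_marked _ _ _ _).1 hw'
    obtain ⟨p, _, -, ⟨k, hk, rfl⟩, rfl⟩ := (mem_marked _ _ _ _).1 hs
    obtain ⟨z, hz, r, hr, he⟩ := Language.mem_mul.1 (LangL'_blocks H' hw)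
    have hz : z = [Sum.inr false] := hz
    subst hz
    obtain ⟨Ls, rfl, hLs⟩ := Language.mem_kstar.1 hr
    have hQ := blocks (Sum.inr false) (fun b => ∀ k : List A, b = k.map Sum.inl → k ∈ H') Ls ?_ p
      (k.map Sum.inl) q (by simpa using he) (by simp) k rfl
    · have : k ∈ H' ⊓ K := ⟨hQ, hk⟩
      rw [hH'] at this
      exact this.elim
    · intro y hy
      obtain ⟨b, hb, z, hz, rfl⟩ := Language.mem_mul.1 (hLs y hy)
      have hz : z = [Sum.inr false] := hz
      subst hz
      refine ⟨b, rfl, ?_⟩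
      rcases hb with ⟨v, hv, rfl⟩ | hb
      · refine ⟨by simp, fun k hk => ?_⟩
        rwa [← List.map_injective_iff.2 Sum.inl_injective hk]
      · obtain ⟨c, hc, d, hd, rfl⟩ := Language.mem_mul.1 hb
        have hd : d = [Sum.inr true] := hd
        subst hd
        refine ⟨?_, fun k hk => ?_⟩
        · intro hm
          rcases List.mem_append.1 hm with hm | hm
          · obtain ⟨a, ha⟩ := hc _ hm
            cases ha
          · simp at hm
        · have : (Sum.inr true : A ⊕ Bool) ∈ k.map Sum.inl := by rw [← hk]; simp
          simp at this

theorem bool_family {S : Set (Language A)} {K : Language A} (h : BoolClosure S K) :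
    ∃ F : Set (Language A), F.Finite ∧ (∀ P ∈ F, P ∈ S) ∧
      ∀ u v : List A, (∀ P ∈ F, u ∈ P ↔ v ∈ P) → (u ∈ K ↔ v ∈ K) := by
  induction h with
  | @base L h =>
    refine ⟨{L}, Set.finite_singleton _, ?_, fun u v h => h L rfl⟩
    rintro _ rfl; exact h
  | compl _ ih =>
    obtain ⟨F, hF, hS, h⟩ := ih
    exact ⟨F, hF, hS, fun u v huv => not_congr (h u v huv)⟩
  | union _ _ ih ih' =>
    obtain ⟨F, hF, hS, h⟩ := ih
    obtain ⟨F', hF', hS', h'⟩ := ih'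
    exact ⟨F ∪ F', hF.union hF', fun P hP => hP.elim (hS P) (hS' P), fun u v huv =>
      or_congr (h u v fun P hP => huv P (Or.inl hP)) (h' u v fun P hP => huv P (Or.inr hP))⟩
  | inter _ _ ih ih' =>
    obtain ⟨F, hF, hS, h⟩ := ih
    obtain ⟨F', hF', hS', h'⟩ := ih'
    exact ⟨F ∪ F', hF.union hF', fun P hP => hP.elim (hS P) (hS' P), fun u v huv =>
      and_congr (h u v fun P hP => huv P (Or.inl hP)) (h' u v fun P hP => huv P (Or.inr hP))⟩

theorem sep_of_family [Finite A] {H H' : Language A} {F : Set (Language A)} (hF : F.Finite)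
    (hP : ∀ P ∈ F, PAT P) (hn : ¬ ∃ h ∈ H, ∃ h' ∈ H', ∀ P ∈ F, h ∈ P → h' ∈ P) :
    Separable (hlevel STbasis 3 A) H H' := by
  let I : Set (Language A) → Language A := fun X => {w | ∀ P ∈ X, w ∈ P}
  let G : Set (Set (Language A)) := {X | X ⊆ F ∧ ∃ h ∈ H, X = {P ∈ F | h ∈ P}}
  have hG : G.Finite := hF.finite_subsets.subset fun X hX => hX.1
  refine ⟨{w | ∃ X ∈ G, w ∈ I X}, PAT.level3 ?_, ?_, ?_⟩
  · have key : ∀ X ∈ G, PAT (I X) := fun X hX =>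
      PAT.biInter (hF.subset hX.1) fun P h => hP P (hX.1 h)
    let g : Set (Language A) → Language A := I
    have e : ({w | ∃ X ∈ G, w ∈ I X} : Language A) =
        {w | ∃ L ∈ I '' G, w ∈ (id L : Language A)} := by
      ext w
      constructor
      · rintro ⟨X, hX, hw⟩; exact ⟨_, ⟨X, hX, rfl⟩, hw⟩
      · rintro ⟨_, ⟨X, hX, rfl⟩, hw⟩; exact ⟨X, hX, hw⟩
    rw [e]
    apply PAT.biUnion (hG.image I) id
    rintro _ ⟨X, hX, rfl⟩
    exact key X hX
  · intro h hh
    exact ⟨{P ∈ F | h ∈ P}, ⟨fun P hP => hP.1, h, hh, rfl⟩, fun P hP => hP.2⟩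
  · refine le_antisymm ?_ bot_le
    rintro h' ⟨hh', X, ⟨-, h, hh, rfl⟩, hI⟩
    exact hn ⟨h, hh, h', hh', fun P hP hhP => hI P ⟨hP, hhP⟩⟩

theorem rep_mem_kstar {X : Language A} {x : List A} (hx : x ∈ X) (n : ℕ) : rep x n ∈ X∗ := by
  refine Language.mem_kstar.2 ⟨List.replicate n x, ?_, ?_⟩
  · induction n with
    | zero => rfl
    | succ n ih => simp [rep, ih, List.replicate_succ]
  · intro y hy
    rw [List.eq_of_mem_replicate hy]; exact hx

theorem choose_family {S : Set (Language (A ⊕ Bool))} (hS : S.Finite) (h : ∀ K ∈ S, PAT K) :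
    ∃ F : Set (Language A), F.Finite ∧ (∀ P ∈ F, PAT P) ∧
      ∀ K ∈ S, ∀ h h' : List A, (∀ P ∈ F, h ∈ P → h' ∈ P) → ∀ p q : List (A ⊕ Bool),
        p ++ (h.map Sum.inl ++ q) ∈ K → p ++ (h'.map Sum.inl ++ q) ∈ K := by
  choose! f hf hP hc using fun K hK => context_family (h K hK)
  refine ⟨⋃ K ∈ S, f K, hS.biUnion hf, ?_, ?_⟩
  · intro P hp
    obtain ⟨K, hK, hp⟩ := Set.mem_iUnion₂.1 hp
    exact hP K hK P hp
  · intro K hK h h' hh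
    exact hc K hK h h' fun P hp => hh P (Set.mem_iUnion₂.2 ⟨K, hK, hp⟩)

theorem choose_pump {S : Set (Language A)} (hS : S.Finite) (h : ∀ K ∈ S, PAT K) :
    ∃ n, ∀ K ∈ S, ∀ x : List A, (∀ a, a ∈ x) → ∀ p q y,
      p ++ (rep x n ++ q) ∈ K → p ++ (rep x n ++ (y ++ (rep x n ++ q))) ∈ K := by
  choose! f hf using fun K hK => pump (h K hK)
  obtain ⟨n, hn⟩ := (hS.image f).bddAbove
  exact ⟨n, fun K hK => hf K hK n (hn ⟨K, hK, rfl⟩)⟩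

theorem chain_stable {S : Set (Language A)} (hS : S.Finite) (v : ℕ → List A)
    (hv : ∀ K ∈ S, ∀ n, v n ∈ K → v (n + 1) ∈ K) :
    ∃ n, ∀ K ∈ S, v (n + 1) ∈ K → v n ∈ K := by
  by_contra! hcon
  let f : ℕ → Set (Language A) := fun n => {K ∈ S | v n ∈ K}
  have hf : StrictMono f := by
    refine strictMono_nat_of_lt_succ fun n => ?_
    refine ⟨fun K hK => ⟨hK.1, hv K hK.1 n hK.2⟩, fun hle => ?_⟩
    obtain ⟨K, hK, h1, h2⟩ := hcon n
    exact h2 (hle ⟨hK, h1⟩).2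
  have : (Set.range f).Finite := hS.finite_subsets.subset (by
    rintro _ ⟨n, rfl⟩ K hK
    exact hK.1)
  exact Set.infinite_range_of_injective hf.injective this

theorem backward [Fintype A] {H H' : Language A}
    (h : Separable (hlevel STbasis 4 (A ⊕ Bool)) (LangL H H') (LangL' H')) :
    Separable (hlevel STbasis 3 A) H H' := by
  obtain ⟨K, hK, hL, hL'⟩ := h
  rw [hl4] at hK
  obtain ⟨S, hS, hSP, hSK⟩ := bool_family hK
  have hSP : ∀ P ∈ S, PAT P := fun P hP => PAT.of_level3 (hSP P hP)
  obtain ⟨F, hF, hFP, hFc⟩ := choose_family hS hSP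
  obtain ⟨N, hN⟩ := choose_pump hS hSP
  refine sep_of_family hF hFP ?_
  rintro ⟨h, hh, h', hh', hle⟩
  let x : List (A ⊕ Bool) :=
    (Finset.univ : Finset A).toList.map Sum.inl ++ [Sum.inr true, Sum.inr false]
  have hx : ∀ a, a ∈ x := by
    rintro (a | (_ | _)) <;> simp [x]
  have hxi : rep x N ∈ (innerL : Language (A ⊕ Bool)) := by
    refine rep_mem_kstar ?_ N
    refine Language.mem_mul.2 ⟨(Finset.univ : Finset A).toList.map Sum.inl ++ [Sum.inr true],
      Language.mem_mul.2 ⟨_, ?_, _, rfl, rfl⟩, [Sum.inr false], rfl, by simp [x]⟩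
    intro y hy
    obtain ⟨a, -, rfl⟩ := List.mem_map.1 hy
    exact ⟨a, rfl⟩
  let blk : List (A ⊕ Bool) := h'.map Sum.inl ++ ([Sum.inr false] ++ rep x N)
  have hblk : blk ∈ embA H' * hashL * innerL := by
    refine Language.mem_mul.2 ⟨h'.map Sum.inl ++ [Sum.inr false],
      Language.mem_mul.2 ⟨_, ⟨h', hh', rfl⟩, _, rfl, rfl⟩, _, hxi, by simp [blk]⟩
  let v : ℕ → List (A ⊕ Bool) := fun n => [Sum.inr false] ++ rep blk (n + 1)
  let u : ℕ → List (A ⊕ Bool) := fun n => v n ++ (h.map Sum.inl ++ ([Sum.inr false] ++ rep x N))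
  have hv : ∀ n, v n ∈ LangL' H' := fun n =>
    Language.mem_mul.2 ⟨_, rfl, _, rep_mem_kstar hblk _, rfl⟩
  have hu : ∀ n, u n ∈ LangL H H' := fun n =>
    Language.mem_mul.2 ⟨v n ++ h.map Sum.inl ++ [Sum.inr false],
      Language.mem_mul.2 ⟨v n ++ h.map Sum.inl,
        Language.mem_mul.2 ⟨v n, hv n, _, ⟨h, hh, rfl⟩, rfl⟩, _, rfl, rfl⟩, _, hxi, by simp [u]⟩
  have huv : ∀ P ∈ S, ∀ n, u n ∈ P → v (n + 1) ∈ P := by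
    intro P hP n hun
    have e : v (n + 1) = v n ++ (h'.map Sum.inl ++ ([Sum.inr false] ++ rep x N)) := by
      simp only [v]
      rw [rep_succ' blk (n + 1)]
      simp [blk]
    rw [e]
    exact hFc P hP h h' hle _ _ hun
  have hvu : ∀ P ∈ S, ∀ n, v n ∈ P → u n ∈ P := by
    intro P hP n hvn
    have e : v n = ([Sum.inr false] ++ (rep blk n ++ (h'.map Sum.inl ++ [Sum.inr false]))) ++
        (rep x N ++ []) := by
      simp only [v]
      rw [rep_succ']
      simp [blk]
    have e2 : u n = ([Sum.inr false] ++ (rep blk n ++ (h'.map Sum.inl ++ [Sum.inr false]))) ++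
        (rep x N ++ ((h.map Sum.inl ++ [Sum.inr false]) ++ (rep x N ++ []))) := by
      simp only [u, e]
      simp
    rw [e2]
    rw [e] at hvn
    exact hN P hP x hx _ _ _ hvn
  obtain ⟨n, hn⟩ := chain_stable hS v fun P hP n hvn => huv P hP n (hvu P hP n hvn)
  have hiff := hSK (u n) (v n) fun P hP =>
    ⟨fun hp => hn P hP (huv P hP n hp), fun hp => hvu P hP n hp⟩
  have : v n ∈ LangL' H' ⊓ K := ⟨hv n, hiff.1 (hL (hu n))⟩
  rw [hL'] at this
  exact this.elim


/-- `H` is `ST[3/2]`-separable from `H'` if and only if `L` is `ST[2]`-separable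
from `L'` (levels of the Straubing-Thérien hierarchy are indexed in half units:
`3` is level `3/2` and `4` is level `2`). -/
theorem statement15 [Fintype A] (H H' : Language A) :
    Separable (hlevel STbasis 3 A) H H' ↔
      Separable (hlevel STbasis 4 (A ⊕ Bool)) (LangL H H') (LangL' H') := by
  exact ⟨forward, backward⟩

end Statement15
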